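/- The function μ is locally Lipschitz on (0,∞): for every 0 < a < b there exists a constant K > 0 such that |μ(s₁) − μ(s₂)| ≤ K |s₁ − s₂| for all s₁, s₂ ∈ [a,b]. -/

import Mathlib

open Set MeasureTheory intervalIntegral Filter Topology

noncomputable section

namespace RT

/-- The piecewise integral `∫_{-m}^0 + ∫_0^ℓ`. -/
def pwInt (m l : ℝ) (f : ℝ → ℝ) : ℝ :=
  (∫ x in (-m)..(0:ℝ), f x) + ∫ x in (0:ℝ)..l, f x

/-- `f` restricted to `[-m,0)` extends continuously to `[-m,0]`, and `f` restricted to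
`(0,ℓ]` extends continuously to `[0,ℓ]`. -/
def PiecewiseCont (m l : ℝ) (f : ℝ → ℝ) : Prop :=
  (∃ F : ℝ → ℝ, ContinuousOn F (Icc (-m) 0) ∧ EqOn f F (Ico (-m) 0)) ∧
  (∃ F : ℝ → ℝ, ContinuousOn F (Icc 0 l) ∧ EqOn f F (Ioc 0 l))

/-- A profile function: the restriction to `[-m,0)` extends continuously to `[-m,0]`, and
the function is continuous on `[0,ℓ]` (hence right-continuous at `0`). -/
def Profile (m l : ℝ) (f : ℝ → ℝ) : Prop :=
  (∃ F : ℝ → ℝ, ContinuousOn F (Icc (-m) 0) ∧ EqOn f F (Ico (-m) 0)) ∧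
  ContinuousOn f (Icc 0 l)

/-- The four steady-state profiles `ρ0, p, ε0, δ0` with their positivity assumptions. -/
def ProfilesHyp (m l : ℝ) (ρ0 p ε0 δ0 : ℝ → ℝ) : Prop :=
  Profile m l ρ0 ∧ Profile m l p ∧ Profile m l ε0 ∧ Profile m l δ0 ∧
  (∀ x ∈ Icc (-m) l, 0 < ρ0 x) ∧ (∀ x ∈ Icc (-m) l, 0 < p x) ∧
  (∀ x ∈ Icc (-m) l, 0 < ε0 x) ∧ (∀ x ∈ Icc (-m) l, 0 ≤ δ0 x)

/-- `f` is continuous on `[-m,ℓ]` and continuously differentiable on `[-m,0]` and on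
`[0,ℓ]`, with piecewise derivative `fd`. -/
def PiecewiseC1 (m l : ℝ) (f fd : ℝ → ℝ) : Prop :=
  ContinuousOn f (Icc (-m) l) ∧
  (∀ x ∈ Ico (-m) 0, HasDerivWithinAt f (fd x) (Icc (-m) 0) x) ∧
  (∀ x ∈ Ioc 0 l, HasDerivWithinAt f (fd x) (Icc 0 l) x) ∧
  PiecewiseCont m l fd

/-- An admissible pair `(φ,ψ)` with piecewise derivatives `(φd,ψd)`. -/
def Admissible (m l : ℝ) (φ ψ φd ψd : ℝ → ℝ) : Prop :=
  PiecewiseC1 m l φ φd ∧ PiecewiseC1 m l ψ ψd ∧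
  φ (-m) = 0 ∧ φ l = 0 ∧ ψ (-m) = 0 ∧ ψ l = 0

/-- The energy `E(φ,ψ;s)`. -/
def energyE (m l g σ k : ℝ) (ρ0 p ε0 δ0 : ℝ → ℝ) (φ ψ φd ψd : ℝ → ℝ) (s : ℝ) : ℝ :=
  σ * k ^ 2 / 2 * (ψ 0) ^ 2
  + (1 / 2) * pwInt m l (fun x =>
      (s * δ0 x + p x * ρ0 x) * (ψd x + k * φ x) ^ 2 - 2 * g * ρ0 x * k * φ x * ψ x)
  + (s / 2) * pwInt m l (fun x =>
      ε0 x * ((φd x - k * ψ x) ^ 2 + (ψd x - k * φ x) ^ 2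
        + (1 / 3) * (ψd x + k * φ x) ^ 2))

/-- The normalization functional `J(φ,ψ)`. -/
def energyJ (m l : ℝ) (ρ0 : ℝ → ℝ) (φ ψ : ℝ → ℝ) : ℝ :=
  (1 / 2) * pwInt m l (fun x => ρ0 x * ((φ x) ^ 2 + (ψ x) ^ 2))

/-- The viscous part `E1(φ,ψ)` of the energy. -/
def energyE1 (m l k : ℝ) (ε0 δ0 : ℝ → ℝ) (φ ψ φd ψd : ℝ → ℝ) : ℝ :=
  (1 / 2) * pwInt m l (fun x => (δ0 x + ε0 x / 3) * (ψd x + k * φ x) ^ 2)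
  + (1 / 2) * pwInt m l (fun x =>
      ε0 x * ((φd x - k * ψ x) ^ 2 + (ψd x - k * φ x) ^ 2))

/-- `μ(s)`: the infimum of `E(·,·;s)` over admissible pairs with `J = 1`. -/
def muInf (m l g σ k : ℝ) (ρ0 p ε0 δ0 : ℝ → ℝ) (s : ℝ) : ℝ :=
  sInf { e : ℝ | ∃ φ ψ φd ψd : ℝ → ℝ, Admissible m l φ ψ φd ψd ∧
    energyJ m l ρ0 φ ψ = 1 ∧ e = energyE m l g σ k ρ0 p ε0 δ0 φ ψ φd ψd s }

/-- The hydrostatic steady-state relation `ρ0' = -g ρ0 / p` on each piece. -/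
def Hydrostatic (m l g : ℝ) (ρ0 p : ℝ → ℝ) : Prop :=
  (∀ x ∈ Ico (-m) 0, HasDerivWithinAt ρ0 (-g * ρ0 x / p x) (Ico (-m) 0) x) ∧
  (∀ x ∈ Ioc 0 l, HasDerivWithinAt ρ0 (-g * ρ0 x / p x) (Ioc 0 l) x)

end RT

namespace RT

/-! The energy is affine in the viscosity parameter, `E(φ,ψ;s) = E(φ,ψ;0) + s E₁(φ,ψ)`, with
slope `E₁ ≥ 0`, and `E(φ,ψ;0) ≥ -|g k| J(φ,ψ)` because gravity is the only indefinite term. As an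
infimum of such functions, `μ` is concave and monotone on `[0,∞)`. The slopes of a concave function
decrease, so on `[a,∞)` those of `μ` lie between `0` and the slope of `μ` on `[0,a]`. -/

section Concave

lemma concaveOn_iInf {E : Type*} [AddCommMonoid E] [SMul ℝ E] {ι : Sort*} {s : Set E}
    {f : ι → E → ℝ} (hs : Convex ℝ s) (hf : ∀ i, ConcaveOn ℝ s (f i))
    (hbdd : ∀ x ∈ s, BddBelow (range fun i => f i x)) :
    ConcaveOn ℝ s fun x => ⨅ i, f i x := by
  cases isEmpty_or_nonempty ι
  · simpa only [Real.iInf_of_isEmpty] using concaveOn_const 0 hs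
  · refine ⟨hs, fun x hx y hy a b ha hb hab => le_ciInf fun i => ?_⟩
    calc a • (⨅ i, f i x) + b • (⨅ i, f i y)
        ≤ a • f i x + b • f i y := by
          gcongr
          exacts [ciInf_le (hbdd x hx) i, ciInf_le (hbdd y hy) i]
      _ ≤ f i (a • x + b • y) := (hf i).2 hx hy ha hb hab

lemma monotoneOn_iInf {α β : Type*} [Preorder α] [ConditionallyCompleteLattice β] {ι : Sort*}
    {s : Set α} {f : ι → α → β} (hf : ∀ i, MonotoneOn (f i) s)
    (hbdd : ∀ x ∈ s, BddBelow (range fun i => f i x)) :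
    MonotoneOn (fun x => ⨅ i, f i x) s :=
  fun x hx _ hy hxy => ciInf_mono (hbdd x hx) fun i => hf i hx hy hxy

lemma slope_le_slope_of_concaveOn {𝕜 : Type*} [Field 𝕜] [LinearOrder 𝕜] [IsStrictOrderedRing 𝕜]
    {s : Set 𝕜} {f : 𝕜 → 𝕜} {c a x y : 𝕜} (hf : ConcaveOn 𝕜 s f) (hc : c ∈ s) (ha : a ∈ s)
    (hx : x ∈ s) (hy : y ∈ s) (hca : c < a) (hax : a ≤ x) (hxy : x < y) :
    slope f x y ≤ slope f c a := by
  have hcx : c < x := hca.trans_le hax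
  calc slope f x y
      ≤ slope f c x := by
        simpa only [slope_def_field] using hf.slope_anti_adjacent hc hy hcx hxy
    _ ≤ slope f c a := hf.slope_anti hc ⟨ha, hca.ne'⟩ ⟨hx, hcx.ne'⟩ hax

lemma lipschitzOnWith_of_concaveOn_of_monotoneOn {s : Set ℝ} {f : ℝ → ℝ} {c a : ℝ}
    (hf : ConcaveOn ℝ s f) (hmono : MonotoneOn f s) (hc : c ∈ s) (ha : a ∈ s)
    (hca : c < a) : LipschitzOnWith (slope f c a).toNNReal f (s ∩ Ici a) := by
  refine LipschitzOnWith.of_le_add_mul' _ fun x hx y hy => ?_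
  rcases le_or_gt x y with hxy | hyx
  · have slope_nonneg : 0 ≤ slope f c a := by
      rw [slope_def_field]
      exact div_nonneg (sub_nonneg.2 (hmono hc ha hca.le)) (sub_nonneg.2 hca.le)
    exact (hmono hx.1 hy.1 hxy).trans
      (le_add_of_nonneg_right (mul_nonneg slope_nonneg dist_nonneg))
  · rw [Real.dist_eq, abs_of_pos (sub_pos.2 hyx), ← sub_le_iff_le_add',
      ← div_le_iff₀ (sub_pos.2 hyx), ← slope_def_field]
    exact slope_le_slope_of_concaveOn hf hc ha hy.1 hx.1 hca hy.2 hyx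

end Concave

section PiecewiseCont

variable {m l : ℝ} {f h : ℝ → ℝ}

attribute [fun_prop] PiecewiseCont

lemma PiecewiseCont.map₂ {op : ℝ → ℝ → ℝ} (hop : Continuous fun q : ℝ × ℝ => op q.1 q.2)
    (hf : PiecewiseCont m l f) (hh : PiecewiseCont m l h) :
    PiecewiseCont m l fun x => op (f x) (h x) := by
  obtain ⟨⟨F₁, hF₁, hfF₁⟩, F₂, hF₂, hfF₂⟩ := hf
  obtain ⟨⟨H₁, hH₁, hhH₁⟩, H₂, hH₂, hhH₂⟩ := hh
  exact ⟨⟨_, hop.comp_continuousOn (hF₁.prodMk hH₁), fun x hx => congrArg₂ op (hfF₁ hx) (hhH₁ hx)⟩,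
    _, hop.comp_continuousOn (hF₂.prodMk hH₂), fun x hx => congrArg₂ op (hfF₂ hx) (hhH₂ hx)⟩

@[fun_prop]
lemma PiecewiseCont.const (c : ℝ) : PiecewiseCont m l fun _ => c :=
  ⟨⟨_, continuousOn_const, fun _ _ => rfl⟩, _, continuousOn_const, fun _ _ => rfl⟩

@[fun_prop]
lemma PiecewiseCont.add (hf : PiecewiseCont m l f) (hh : PiecewiseCont m l h) :
    PiecewiseCont m l fun x => f x + h x :=
  hf.map₂ continuous_add hh

@[fun_prop]
lemma PiecewiseCont.sub (hf : PiecewiseCont m l f) (hh : PiecewiseCont m l h) :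
    PiecewiseCont m l fun x => f x - h x :=
  hf.map₂ continuous_sub hh

@[fun_prop]
lemma PiecewiseCont.mul (hf : PiecewiseCont m l f) (hh : PiecewiseCont m l h) :
    PiecewiseCont m l fun x => f x * h x :=
  hf.map₂ continuous_mul hh

@[fun_prop]
lemma PiecewiseCont.pow (hf : PiecewiseCont m l f) (n : ℕ) :
    PiecewiseCont m l fun x => f x ^ n :=
  hf.map₂ (op := fun y _ => y ^ n) (by fun_prop) hf

lemma Profile.piecewiseCont (hf : Profile m l f) : PiecewiseCont m l f :=
  ⟨hf.1, f, hf.2, fun _ _ => rfl⟩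

lemma PiecewiseC1.piecewiseCont {fd : ℝ → ℝ} (hm : 0 ≤ m) (hl : 0 ≤ l)
    (hf : PiecewiseC1 m l f fd) : PiecewiseCont m l f :=
  ⟨⟨f, hf.1.mono (Icc_subset_Icc_right hl), fun _ _ => rfl⟩,
    f, hf.1.mono (Icc_subset_Icc_left (neg_nonpos.2 hm)), fun _ _ => rfl⟩

lemma PiecewiseCont.intervalIntegrable_left (hm : 0 ≤ m) (hf : PiecewiseCont m l f) :
    IntervalIntegrable f volume (-m) 0 := by
  obtain ⟨F, hF, hfF⟩ := hf.1
  rw [intervalIntegrable_iff_integrableOn_Ico_of_le (neg_nonpos.2 hm)]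
  exact (hF.integrableOn_Icc.mono_set Ico_subset_Icc_self).congr_fun hfF.symm measurableSet_Ico

lemma PiecewiseCont.intervalIntegrable_right (hl : 0 ≤ l) (hf : PiecewiseCont m l f) :
    IntervalIntegrable f volume 0 l := by
  obtain ⟨F, hF, hfF⟩ := hf.2
  rw [intervalIntegrable_iff_integrableOn_Ioc_of_le hl]
  exact (hF.integrableOn_Icc.mono_set Ioc_subset_Icc_self).congr_fun hfF.symm measurableSet_Ioc

lemma pwInt_add (hm : 0 ≤ m) (hl : 0 ≤ l) (hf : PiecewiseCont m l f) (hh : PiecewiseCont m l h) :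
    pwInt m l (fun x => f x + h x) = pwInt m l f + pwInt m l h := by
  simp only [pwInt]
  rw [integral_add (hf.intervalIntegrable_left hm) (hh.intervalIntegrable_left hm),
    integral_add (hf.intervalIntegrable_right hl) (hh.intervalIntegrable_right hl)]
  ring

lemma pwInt_const_mul (c : ℝ) : pwInt m l (fun x => c * f x) = c * pwInt m l f := by
  simp only [pwInt, intervalIntegral.integral_const_mul, mul_add]

lemma pwInt_nonneg (hm : 0 ≤ m) (hl : 0 ≤ l) (hf : ∀ x ∈ Icc (-m) l, 0 ≤ f x) :
    0 ≤ pwInt m l f :=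
  add_nonneg
    (integral_nonneg (neg_nonpos.2 hm) fun x hx => hf x (Icc_subset_Icc_right hl hx))
    (integral_nonneg hl fun x hx => hf x (Icc_subset_Icc_left (neg_nonpos.2 hm) hx))

end PiecewiseCont

/-- A nonnegative, piecewise continuous coefficient of the energy, such as a density, viscosity or
`p`. Vacuum and vanishing viscosity are included, and the value at `0` is not tied to the one-sided
limits there. -/
structure NonnegProfile (m l : ℝ) (f : ℝ → ℝ) : Prop where
  piecewiseCont : PiecewiseCont m l f
  nonneg : ∀ x ∈ Icc (-m) l, 0 ≤ f x

lemma ProfilesHyp.nonnegProfile {m l : ℝ} {ρ0 p ε0 δ0 : ℝ → ℝ} (h : ProfilesHyp m l ρ0 p ε0 δ0) :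
    NonnegProfile m l ρ0 ∧ NonnegProfile m l p ∧ NonnegProfile m l ε0 ∧ NonnegProfile m l δ0 := by
  obtain ⟨hρ, hp, hε, hδ, hρ_pos, hp_pos, hε_pos, hδ_nonneg⟩ := h
  exact ⟨⟨hρ.piecewiseCont, fun x hx => (hρ_pos x hx).le⟩,
    ⟨hp.piecewiseCont, fun x hx => (hp_pos x hx).le⟩,
    ⟨hε.piecewiseCont, fun x hx => (hε_pos x hx).le⟩, ⟨hδ.piecewiseCont, hδ_nonneg⟩⟩

section Energy

variable {m l g σ k : ℝ} {ρ0 p ε0 δ0 φ ψ φd ψd : ℝ → ℝ}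

lemma energyE_eq_add_mul_energyE1 (hm : 0 ≤ m) (hl : 0 ≤ l)
    (hρ : PiecewiseCont m l ρ0) (hp : PiecewiseCont m l p)
    (hε : PiecewiseCont m l ε0) (hδ : PiecewiseCont m l δ0)
    (hφ : PiecewiseCont m l φ) (hψ : PiecewiseCont m l ψ)
    (hφd : PiecewiseCont m l φd) (hψd : PiecewiseCont m l ψd) (s : ℝ) :
    energyE m l g σ k ρ0 p ε0 δ0 φ ψ φd ψd s =
      energyE m l g σ k ρ0 p ε0 δ0 φ ψ φd ψd 0 + s * energyE1 m l k ε0 δ0 φ ψ φd ψd := by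
  have bulk_split : pwInt m l (fun x =>
        (s * δ0 x + p x * ρ0 x) * (ψd x + k * φ x) ^ 2 - 2 * g * ρ0 x * k * φ x * ψ x) =
      pwInt m l (fun x =>
        (0 * δ0 x + p x * ρ0 x) * (ψd x + k * φ x) ^ 2 - 2 * g * ρ0 x * k * φ x * ψ x) +
      s * pwInt m l (fun x => δ0 x * (ψd x + k * φ x) ^ 2) := by
    rw [← pwInt_const_mul, ← pwInt_add hm hl (by fun_prop) (by fun_prop)]
    exact congrArg _ (funext fun x => by ring)
  have viscous_regroup : pwInt m l (fun x => δ0 x * (ψd x + k * φ x) ^ 2) +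
      pwInt m l (fun x => ε0 x * ((φd x - k * ψ x) ^ 2 + (ψd x - k * φ x) ^ 2
        + (1 / 3) * (ψd x + k * φ x) ^ 2)) =
      pwInt m l (fun x => (δ0 x + ε0 x / 3) * (ψd x + k * φ x) ^ 2) +
      pwInt m l (fun x => ε0 x * ((φd x - k * ψ x) ^ 2 + (ψd x - k * φ x) ^ 2)) := by
    simp only [div_eq_mul_inv]
    rw [← pwInt_add hm hl (by fun_prop) (by fun_prop),
      ← pwInt_add hm hl (by fun_prop) (by fun_prop)]
    exact congrArg _ (funext fun x => by ring)
  simp only [energyE, energyE1]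
  linear_combination (1 / 2) * bulk_split + (s / 2) * viscous_regroup

lemma energyE1_nonneg (hm : 0 ≤ m) (hl : 0 ≤ l)
    (hε_nonneg : ∀ x ∈ Icc (-m) l, 0 ≤ ε0 x) (hδ_nonneg : ∀ x ∈ Icc (-m) l, 0 ≤ δ0 x) :
    0 ≤ energyE1 m l k ε0 δ0 φ ψ φd ψd := by
  refine add_nonneg (mul_nonneg one_half_pos.le (pwInt_nonneg hm hl fun x hx => ?_))
    (mul_nonneg one_half_pos.le (pwInt_nonneg hm hl fun x hx => ?_))
  all_goals
    have := hε_nonneg x hx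
    have := hδ_nonneg x hx
    positivity

lemma neg_abs_mul_energyJ_le_energyE_zero (hm : 0 ≤ m) (hl : 0 ≤ l) (hσ : 0 ≤ σ)
    (hρ : NonnegProfile m l ρ0) (hp : NonnegProfile m l p) (hδ : PiecewiseCont m l δ0)
    (hφ : PiecewiseCont m l φ) (hψ : PiecewiseCont m l ψ) (hψd : PiecewiseCont m l ψd) :
    -|g * k| * energyJ m l ρ0 φ ψ ≤ energyE m l g σ k ρ0 p ε0 δ0 φ ψ φd ψd 0 := by
  have gravity_le (x : ℝ) : g * k * (2 * φ x * ψ x) ≤ |g * k| * (φ x ^ 2 + ψ x ^ 2) := by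
    refine (le_abs_self _).trans ?_
    rw [abs_mul]
    gcongr
    exact abs_le.2 ⟨by linarith [sq_nonneg (φ x + ψ x)], two_mul_le_add_sq _ _⟩
  have bulk_nonneg : 0 ≤ pwInt m l fun x =>
      ((0 * δ0 x + p x * ρ0 x) * (ψd x + k * φ x) ^ 2 - 2 * g * ρ0 x * k * φ x * ψ x) +
        |g * k| * (ρ0 x * (φ x ^ 2 + ψ x ^ 2)) :=
    pwInt_nonneg hm hl fun x hx => by
      have compression_nonneg : 0 ≤ p x * ρ0 x * (ψd x + k * φ x) ^ 2 :=
        mul_nonneg (mul_nonneg (hp.nonneg x hx) (hρ.nonneg x hx)) (sq_nonneg _)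
      linarith [mul_le_mul_of_nonneg_left (gravity_le x) (hρ.nonneg x hx)]
  have hρ_cont := hρ.piecewiseCont
  have hp_cont := hp.piecewiseCont
  rw [pwInt_add hm hl (by fun_prop) (by fun_prop), pwInt_const_mul] at bulk_nonneg
  have surface_nonneg : 0 ≤ σ * k ^ 2 / 2 * ψ 0 ^ 2 := by positivity
  simp only [energyE, energyJ]
  linarith

end Energy

/-- A competitor in the variational problem for `μ`: an admissible pair `(φ,ψ)`, bundled with its
piecewise derivatives `(φd,ψd)` and normalized by `J(φ,ψ) = 1`. -/
structure NormalizedPair (m l : ℝ) (ρ0 : ℝ → ℝ) where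
  φ : ℝ → ℝ
  ψ : ℝ → ℝ
  φd : ℝ → ℝ
  ψd : ℝ → ℝ
  admissible : Admissible m l φ ψ φd ψd
  energyJ_eq_one : energyJ m l ρ0 φ ψ = 1

section InfimumOfEnergies

variable {m l g σ k a s : ℝ} {ρ0 p ε0 δ0 : ℝ → ℝ}

lemma NormalizedPair.energyE_eq_add_mul_energyE1 (hm : 0 ≤ m) (hl : 0 ≤ l)
    (hρ : PiecewiseCont m l ρ0) (hp : PiecewiseCont m l p)
    (hε : PiecewiseCont m l ε0) (hδ : PiecewiseCont m l δ0)
    (q : NormalizedPair m l ρ0) (s : ℝ) :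
    energyE m l g σ k ρ0 p ε0 δ0 q.φ q.ψ q.φd q.ψd s =
      energyE m l g σ k ρ0 p ε0 δ0 q.φ q.ψ q.φd q.ψd 0 +
        s * energyE1 m l k ε0 δ0 q.φ q.ψ q.φd q.ψd :=
  have ⟨hφ, hψ, _⟩ := q.admissible
  RT.energyE_eq_add_mul_energyE1 hm hl hρ hp hε hδ (hφ.piecewiseCont hm hl)
    (hψ.piecewiseCont hm hl) hφ.2.2.2 hψ.2.2.2 s

lemma NormalizedPair.concaveOn_energyE (hm : 0 ≤ m) (hl : 0 ≤ l)
    (hρ : PiecewiseCont m l ρ0) (hp : PiecewiseCont m l p)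
    (hε : PiecewiseCont m l ε0) (hδ : PiecewiseCont m l δ0) (q : NormalizedPair m l ρ0)
    {S : Set ℝ} (hS : Convex ℝ S) :
    ConcaveOn ℝ S (energyE m l g σ k ρ0 p ε0 δ0 q.φ q.ψ q.φd q.ψd) := by
  rw [funext (q.energyE_eq_add_mul_energyE1 hm hl hρ hp hε hδ)]
  exact (concaveOn_const _ hS).add ((LinearMap.mulRight ℝ _).concaveOn hS)

lemma NormalizedPair.monotone_energyE (hm : 0 ≤ m) (hl : 0 ≤ l)
    (hρ : PiecewiseCont m l ρ0) (hp : PiecewiseCont m l p)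
    (hε : NonnegProfile m l ε0) (hδ : NonnegProfile m l δ0) (q : NormalizedPair m l ρ0) :
    Monotone (energyE m l g σ k ρ0 p ε0 δ0 q.φ q.ψ q.φd q.ψd) := by
  rw [funext (q.energyE_eq_add_mul_energyE1 hm hl hρ hp hε.piecewiseCont hδ.piecewiseCont)]
  exact (monotone_mul_right_of_nonneg (energyE1_nonneg hm hl hε.nonneg hδ.nonneg)).const_add _

lemma NormalizedPair.neg_abs_le_energyE (hm : 0 ≤ m) (hl : 0 ≤ l) (hσ : 0 ≤ σ)
    (hρ : NonnegProfile m l ρ0) (hp : NonnegProfile m l p)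
    (hε : NonnegProfile m l ε0) (hδ : NonnegProfile m l δ0) (q : NormalizedPair m l ρ0)
    (hs : 0 ≤ s) : -|g * k| ≤ energyE m l g σ k ρ0 p ε0 δ0 q.φ q.ψ q.φd q.ψd s := by
  obtain ⟨hφ, hψ, -⟩ := q.admissible
  calc -|g * k| = -|g * k| * energyJ m l ρ0 q.φ q.ψ := by rw [q.energyJ_eq_one, mul_one]
    _ ≤ energyE m l g σ k ρ0 p ε0 δ0 q.φ q.ψ q.φd q.ψd 0 :=
      neg_abs_mul_energyJ_le_energyE_zero hm hl hσ hρ hp hδ.piecewiseCont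
        (hφ.piecewiseCont hm hl) (hψ.piecewiseCont hm hl) hψ.2.2.2
    _ ≤ energyE m l g σ k ρ0 p ε0 δ0 q.φ q.ψ q.φd q.ψd s :=
      q.monotone_energyE hm hl hρ.piecewiseCont hp.piecewiseCont hε hδ hs

lemma bddBelow_range_energyE (hm : 0 ≤ m) (hl : 0 ≤ l) (hσ : 0 ≤ σ)
    (hρ : NonnegProfile m l ρ0) (hp : NonnegProfile m l p)
    (hε : NonnegProfile m l ε0) (hδ : NonnegProfile m l δ0) (hs : 0 ≤ s) :
    BddBelow (range fun q : NormalizedPair m l ρ0 =>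
      energyE m l g σ k ρ0 p ε0 δ0 q.φ q.ψ q.φd q.ψd s) :=
  ⟨-|g * k|, forall_mem_range.2 fun q => q.neg_abs_le_energyE hm hl hσ hρ hp hε hδ hs⟩

lemma muInf_eq_iInf (m l g σ k : ℝ) (ρ0 p ε0 δ0 : ℝ → ℝ) :
    muInf m l g σ k ρ0 p ε0 δ0 =
      fun s => ⨅ q : NormalizedPair m l ρ0, energyE m l g σ k ρ0 p ε0 δ0 q.φ q.ψ q.φd q.ψd s := by
  funext s
  refine congrArg sInf (Set.ext fun e => ⟨?_, ?_⟩)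
  · rintro ⟨φ, ψ, φd, ψd, hadm, hJ, rfl⟩
    exact ⟨⟨φ, ψ, φd, ψd, hadm, hJ⟩, rfl⟩
  · rintro ⟨q, rfl⟩
    exact ⟨q.φ, q.ψ, q.φd, q.ψd, q.admissible, q.energyJ_eq_one, rfl⟩

lemma concaveOn_muInf (hm : 0 ≤ m) (hl : 0 ≤ l) (hσ : 0 ≤ σ)
    (hρ : NonnegProfile m l ρ0) (hp : NonnegProfile m l p)
    (hε : NonnegProfile m l ε0) (hδ : NonnegProfile m l δ0) :
    ConcaveOn ℝ (Ici 0) (muInf m l g σ k ρ0 p ε0 δ0) := by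
  rw [muInf_eq_iInf]
  exact concaveOn_iInf (convex_Ici 0)
    (fun q => q.concaveOn_energyE hm hl hρ.piecewiseCont hp.piecewiseCont hε.piecewiseCont
      hδ.piecewiseCont (convex_Ici 0))
    (fun _ hs => bddBelow_range_energyE hm hl hσ hρ hp hε hδ hs)

lemma monotoneOn_muInf (hm : 0 ≤ m) (hl : 0 ≤ l) (hσ : 0 ≤ σ)
    (hρ : NonnegProfile m l ρ0) (hp : NonnegProfile m l p)
    (hε : NonnegProfile m l ε0) (hδ : NonnegProfile m l δ0) :
    MonotoneOn (muInf m l g σ k ρ0 p ε0 δ0) (Ici 0) := by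
  rw [muInf_eq_iInf]
  exact monotoneOn_iInf
    (fun q => (q.monotone_energyE hm hl hρ.piecewiseCont hp.piecewiseCont hε hδ).monotoneOn _)
    (fun _ hs => bddBelow_range_energyE hm hl hσ hρ hp hε hδ hs)

theorem muInf_locally_lipschitz_general (hm : 0 ≤ m) (hl : 0 ≤ l) (hσ : 0 ≤ σ)
    (hρ : NonnegProfile m l ρ0) (hp : NonnegProfile m l p)
    (hε : NonnegProfile m l ε0) (hδ : NonnegProfile m l δ0) (ha : 0 < a) :
    LipschitzOnWith (slope (muInf m l g σ k ρ0 p ε0 δ0) 0 a).toNNReal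
      (muInf m l g σ k ρ0 p ε0 δ0) (Ici a) := by
  have hLip := lipschitzOnWith_of_concaveOn_of_monotoneOn
    (concaveOn_muInf (g := g) (k := k) hm hl hσ hρ hp hε hδ)
    (monotoneOn_muInf hm hl hσ hρ hp hε hδ) self_mem_Ici ha.le ha
  rwa [inter_eq_right.2 (Ici_subset_Ici.2 ha.le)] at hLip

end InfimumOfEnergies

/-- The function `μ` is locally Lipschitz on `(0,∞)`. -/
theorem muInf_locally_lipschitz (m l g σ k : ℝ) (ρ0 p ε0 δ0 : ℝ → ℝ)
    (hm : 0 < m) (hl : 0 < l) (hg : 0 < g) (hσ : 0 ≤ σ) (hk : 0 < k)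
    (hprof : ProfilesHyp m l ρ0 p ε0 δ0) :
    ∀ a b : ℝ, 0 < a → a < b →
      ∃ K : ℝ, 0 < K ∧ ∀ s₁ ∈ Icc a b, ∀ s₂ ∈ Icc a b,
        |muInf m l g σ k ρ0 p ε0 δ0 s₁ - muInf m l g σ k ρ0 p ε0 δ0 s₂|
          ≤ K * |s₁ - s₂| := by
  obtain ⟨hρ, hp, hε, hδ⟩ := hprof.nonnegProfile
  intro a b ha _
  obtain ⟨K, hLip⟩ : ∃ K, LipschitzOnWith K (muInf m l g σ k ρ0 p ε0 δ0) (Ici a) :=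
    ⟨_, muInf_locally_lipschitz_general hm.le hl.le hσ hρ hp hε hδ ha⟩
  exact ⟨(K + 1 : NNReal), by positivity, fun s₁ h₁ s₂ h₂ =>
    (hLip.weaken le_self_add).dist_le_mul s₁ h₁.1 s₂ h₂.1⟩

end RT
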